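/- arXiv:1305.4449 — 7 statements merged into one kernel-verified Lean document; each statement's English description precedes it below -/
import Mathlib

section
/- Let μ > 0 be real and n ≥ 0 an integer, and let C be the monic Charlier polynomial of degree n for parameter μ. Then for n ≥ 1, [Σ_{x=0}^∞ ω(x)(C(x+1) − C(x))²] / [Σ_{x=0}^∞ ω(x) C(x)²] = n/μ, where ω(x) = e^{−μ} μ^x / x!; that is, the relative Fisher information of the Charlier polynomials is I_ω[C_n^μ] = n/μ. -/
open Polynomial

theorem summable_poisson_mul_eval {μ : ℝ} (hμ : 0 < μ) (p : ℝ[X]) :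
    Summable fun x : ℕ => (Real.exp (-μ) * μ ^ x / x.factorial) * p.eval (x : ℝ) := by
  induction p using Polynomial.induction_on' with
  | add p q hp hq => simpa only [eval_add, mul_add] using hp.add hq
  | monomial k a =>
    have hpow : Summable fun x : ℕ =>
        (Real.exp (-μ) * μ ^ x / x.factorial) * (x : ℝ) ^ k := by
      refine Summable.of_nonneg_of_le (fun x => by positivity) (fun x => ?_)
        ((Real.summable_pow_div_factorial (μ * Real.exp 1)).mul_left
          (Real.exp (-μ) * k.factorial))
      have hexp : (x : ℝ) ^ k ≤ Real.exp 1 ^ x * k.factorial := by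
        have h := Real.pow_div_factorial_le_exp (x : ℝ) x.cast_nonneg k
        rw [div_le_iff₀ (by positivity)] at h
        rwa [← Real.exp_nat_mul, mul_one]
      calc (Real.exp (-μ) * μ ^ x / x.factorial) * (x : ℝ) ^ k
          ≤ (Real.exp (-μ) * μ ^ x / x.factorial) * (Real.exp 1 ^ x * k.factorial) := by gcongr
        _ = _ := by rw [mul_pow]; ring
    simp only [eval_monomial]
    exact (hpow.mul_left a).congr fun x => by ring

/-- The expectation of a polynomial under the Poisson weight, as a linear functional. -/
noncomputable def poissonExpectation {μ : ℝ} (hμ : 0 < μ) : ℝ[X] →ₗ[ℝ] ℝ where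
  toFun p := ∑' x : ℕ, (Real.exp (-μ) * μ ^ x / x.factorial) * p.eval (x : ℝ)
  map_add' p q := by
    simp only [eval_add, mul_add]
    exact (summable_poisson_mul_eval hμ p).tsum_add (summable_poisson_mul_eval hμ q)
  map_smul' a p := by
    simp only [eval_smul, smul_eq_mul, RingHom.id_apply, ← tsum_mul_left]
    exact tsum_congr fun x => by ring

theorem poissonExpectation_apply {μ : ℝ} (hμ : 0 < μ) (p : ℝ[X]) :
    poissonExpectation hμ p =
      ∑' x : ℕ, (Real.exp (-μ) * μ ^ x / x.factorial) * p.eval (x : ℝ) := rfl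

/-- The Stein–Chen identity `E[X p(X)] = μ E[p(X + 1)]` of the Poisson distribution. -/
theorem poissonExpectation_X_mul {μ : ℝ} (hμ : 0 < μ) (p : ℝ[X]) :
    poissonExpectation hμ (X * p) = μ * poissonExpectation hμ (taylor 1 p) := by
  rw [poissonExpectation_apply, poissonExpectation_apply,
    (summable_poisson_mul_eval hμ (X * p)).tsum_eq_zero_add, ← tsum_mul_left]
  simp only [eval_mul, eval_X, Nat.cast_zero, zero_mul, mul_zero, zero_add, taylor_eval]
  refine tsum_congr fun x => ?_
  have hx : ((x : ℝ) + 1) ≠ 0 := by positivity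
  have hf : (x.factorial : ℝ) ≠ 0 := by positivity
  rw [Nat.factorial_succ]
  push_cast
  field_simp
  ring

theorem poissonExpectation_sq_pos {μ : ℝ} (hμ : 0 < μ) {p : ℝ[X]} (hp : p ≠ 0) :
    0 < poissonExpectation hμ (p ^ 2) := by
  obtain ⟨x, hx⟩ : ∃ x : ℕ, p.eval (x : ℝ) ≠ 0 := by
    by_contra! h
    refine hp (p.eq_zero_of_infinite_isRoot ?_)
    refine (Set.infinite_range_of_injective (Nat.cast_injective (R := ℝ))).mono ?_
    rintro _ ⟨x, rfl⟩
    exact h x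
  refine (summable_poisson_mul_eval hμ (p ^ 2)).tsum_pos (fun y => ?_) x ?_
  · rw [eval_pow]; positivity
  · rw [eval_pow]; positivity

theorem poissonExpectation_mul_eq_zero {μ : ℝ} (hμ : 0 < μ) {p : ℝ[X]} {n : ℕ}
    (h : ∀ k < n, poissonExpectation hμ (p * X ^ k) = 0) {q : ℝ[X]} (hq : q.degree < n) :
    poissonExpectation hμ (p * q) = 0 := by
  rw [q.as_sum_range' n.succ (Nat.lt_succ_of_le (natDegree_le_of_degree_le hq.le)),
    Finset.mul_sum, map_sum]
  refine Finset.sum_eq_zero fun k _ => ?_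
  rw [← C_mul_X_pow_eq_monomial, ← smul_eq_C_mul, mul_smul_comm, map_smul]
  rcases lt_or_ge k n with hk | hk
  · rw [h k hk, smul_zero]
  · rw [coeff_eq_zero_of_degree_lt (hq.trans_le (by exact_mod_cast hk)), zero_smul]

theorem degree_taylor_sub_lt {p : ℝ[X]} (hp : p ≠ 0) (r : ℝ) :
    (taylor r p - p).degree < p.natDegree := by
  rw [← degree_eq_natDegree hp]
  exact degree_sub_lt_right (degree_taylor p r) hp (leadingCoeff_taylor r p)

theorem coeff_taylor_natDegree_sub_one {p : ℝ[X]} {m : ℕ} (hp : p.natDegree = m + 1) (r : ℝ) :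
    (taylor r p).coeff m = p.coeff m + (m + 1) * r * p.leadingCoeff := by
  have hle : (hasseDeriv m p).natDegree < 2 := by
    have := natDegree_hasseDeriv_le p m
    omega
  rw [taylor_coeff, eval_eq_sum_range' hle, Finset.sum_range_succ, Finset.sum_range_one,
    hasseDeriv_coeff, hasseDeriv_coeff, leadingCoeff, hp, add_comm 1 m, zero_add,
    Nat.choose_self, Nat.choose_succ_self_right]
  push_cast
  ring

/-- The leading terms of `x (p(x) - p(x - 1))` and `n p(x)` agree, where `n` is the degree. -/
theorem degree_X_mul_backward_sub_lt {p : ℝ[X]} {n : ℕ} (hn : 1 ≤ n) (hp : p.natDegree = n) :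
    (X * (p - taylor (-1) p) - (n : ℝ) • p).degree < (n : WithBot ℕ) := by
  obtain ⟨m, rfl⟩ : ∃ m, n = m + 1 := ⟨n - 1, by omega⟩
  have hp0 : p ≠ 0 := by rintro rfl; simp at hp
  have hback : (p - taylor (-1) p).degree < (m + 1 : ℕ) := by
    rw [← neg_sub, degree_neg, ← hp]
    exact degree_taylor_sub_lt hp0 (-1)
  rw [degree_lt_iff_coeff_zero] at hback ⊢
  intro k hk
  obtain ⟨j, rfl⟩ : ∃ j, k = j + 1 := ⟨k - 1, by omega⟩
  rw [coeff_sub, coeff_X_mul, coeff_smul, smul_eq_mul]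
  rcases eq_or_lt_of_le (Nat.le_of_succ_le_succ hk) with rfl | hj
  · rw [coeff_sub, coeff_taylor_natDegree_sub_one hp, leadingCoeff, hp]
    push_cast
    ring
  · rw [hback j hj, coeff_eq_zero_of_natDegree_lt (by omega)]
    simp

/-- The relative Fisher information of the monic Charlier polynomial of degree `n ≥ 1`
with respect to the Poisson weight `ω(x) = e^{-μ} μ^x / x!` equals `n/μ`. -/
theorem charlier_relative_fisher
    (μ : ℝ) (hμ : 0 < μ) (n : ℕ) (hn : 1 ≤ n)
    (C : Polynomial ℝ) (hmonic : C.Monic) (hdeg : C.natDegree = n)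
    (horth : ∀ k : ℕ, k < n →
      ∑' x : ℕ, (Real.exp (-μ) * μ ^ x / x.factorial) * C.eval (x : ℝ) * (x : ℝ) ^ k = 0) :
    (∑' x : ℕ, (Real.exp (-μ) * μ ^ x / x.factorial) *
        (C.eval ((x : ℝ) + 1) - C.eval (x : ℝ)) ^ 2) /
      (∑' x : ℕ, (Real.exp (-μ) * μ ^ x / x.factorial) * (C.eval (x : ℝ)) ^ 2)
    = n / μ := by
  have horth' : ∀ k < n, poissonExpectation hμ (C * X ^ k) = 0 := fun k hk => by
    simpa [poissonExpectation_apply, mul_assoc] using horth k hk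
  have hnum : (∑' x : ℕ, (Real.exp (-μ) * μ ^ x / x.factorial) *
      (C.eval ((x : ℝ) + 1) - C.eval (x : ℝ)) ^ 2) =
        poissonExpectation hμ ((taylor 1 C - C) ^ 2) := by
    simp [poissonExpectation_apply, taylor_eval]
  have hden : (∑' x : ℕ, (Real.exp (-μ) * μ ^ x / x.factorial) * (C.eval (x : ℝ)) ^ 2) =
      poissonExpectation hμ (C ^ 2) := by
    simp [poissonExpectation_apply]
  have hpos := poissonExpectation_sq_pos hμ hmonic.ne_zero
  have hfwd : poissonExpectation hμ (C * (taylor 1 C - C)) = 0 :=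
    poissonExpectation_mul_eq_zero hμ horth' (hdeg ▸ degree_taylor_sub_lt hmonic.ne_zero 1)
  have hbwd := poissonExpectation_mul_eq_zero hμ horth' (degree_X_mul_backward_sub_lt hn hdeg)
  have hstein := poissonExpectation_X_mul hμ (C * (C - taylor (-1) C))
  have hshift : taylor 1 (C * (C - taylor (-1) C)) =
      (taylor 1 C - C) ^ 2 + C * (taylor 1 C - C) := by
    rw [taylor_mul, map_sub, taylor_taylor]
    simp
    ring
  have hsplit : C * (X * (C - taylor (-1) C) - (n : ℝ) • C) =
      X * (C * (C - taylor (-1) C)) - (n : ℝ) • C ^ 2 := by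
    rw [mul_sub, mul_smul_comm]
    ring_nf
  rw [hshift, map_add, hfwd, add_zero] at hstein
  rw [hsplit, map_sub, map_smul, smul_eq_mul, hstein] at hbwd
  rw [hnum, hden, div_eq_div_iff hpos.ne' hμ.ne']
  linarith
end

section
/- Let γ > 0 and 0 < μ < 1 be real and n ≥ 1 an integer. Then the forward difference of the monic Meixner polynomial of degree n satisfies, for all real x, M_n^{γ,μ}(x+1) − M_n^{γ,μ}(x) = n Σ_{j=0}^{n-1} (j+1)_{n-j-1} (μ/(μ−1))^{n-j-1} M_j^{γ,μ}(x). -/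
/-- Pochhammer symbol `(a)_k = a(a+1)⋯(a+k-1)`. -/
noncomputable def poch (a : ℝ) (k : ℕ) : ℝ := ∏ i ∈ Finset.range k, (a + i)

open Polynomial Filter Topology

/-- The Meixner weight `μ ^ x Γ(γ + x) / (x! Γ(γ))` on the nonnegative integers. -/
noncomputable def meixnerWeight (γ μ : ℝ) (x : ℕ) : ℝ :=
  μ ^ x * Real.Gamma (γ + x) / (x.factorial * Real.Gamma γ)

section Weight

variable {γ μ : ℝ}

theorem meixnerWeight_pos (hγ : 0 < γ) (hμ : 0 < μ) (x : ℕ) : 0 < meixnerWeight γ μ x := by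
  have := Real.Gamma_pos_of_pos hγ
  have := Real.Gamma_pos_of_pos (show 0 < γ + x by positivity)
  unfold meixnerWeight
  positivity

/-- The discrete Pearson equation of the Meixner weight. -/
theorem meixnerWeight_succ (hγ : 0 < γ) (x : ℕ) :
    meixnerWeight γ μ (x + 1) * (x + 1) = μ * ((γ + x) * meixnerWeight γ μ x) := by
  have hΓ := (Real.Gamma_pos_of_pos hγ).ne'
  have hx : γ + x ≠ 0 := by positivity
  have hfact : (x.factorial : ℝ) ≠ 0 := by positivity
  have hx1 : (x : ℝ) + 1 ≠ 0 := by positivity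
  unfold meixnerWeight
  rw [Nat.factorial_succ]
  push_cast
  rw [← add_assoc, Real.Gamma_add_one hx, pow_succ']
  field_simp

theorem summable_meixnerWeight_mul_pow (hγ : 0 < γ) (hμ0 : 0 < μ) (hμ1 : μ < 1) (k : ℕ) :
    Summable fun x : ℕ => meixnerWeight γ μ x * (x : ℝ) ^ k := by
  have hinv : Tendsto (fun x : ℕ => 1 / ((x : ℝ) + 1)) atTop (𝓝 0) :=
    tendsto_one_div_add_atTop_nhds_zero_nat
  have hlim : Tendsto (fun x : ℕ => μ * (1 + (γ - 1) * (1 / ((x : ℝ) + 1))) *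
      (1 + 1 / ((x : ℝ) + 1)) ^ k) atTop (𝓝 μ) := by
    have h := (((hinv.const_mul (γ - 1)).const_add 1).const_mul μ).mul
      ((hinv.const_add 1).pow k)
    simpa using h
  have hs : Summable fun x : ℕ => meixnerWeight γ μ x * ((x : ℝ) + 1) ^ k := by
    refine summable_of_ratio_test_tendsto_lt_one hμ1
      (Eventually.of_forall fun x => ?_) (hlim.congr fun x => ?_)
    · have := meixnerWeight_pos hγ hμ0 x
      positivity
    · have h0 := meixnerWeight_pos hγ hμ0 x
      have h1 := meixnerWeight_pos hγ hμ0 (x + 1)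
      have hx1 : (x : ℝ) + 1 ≠ 0 := by positivity
      have hw : meixnerWeight γ μ (x + 1) =
          μ * ((γ + x) * meixnerWeight γ μ x) / (x + 1) := by
        rw [eq_div_iff hx1, meixnerWeight_succ hγ]
      rw [Real.norm_of_nonneg (by positivity), Real.norm_of_nonneg (by positivity), hw]
      have e1 : 1 + (γ - 1) * (1 / ((x : ℝ) + 1)) = (γ + x) / (x + 1) := by
        field_simp
        ring
      have e2 : 1 + 1 / ((x : ℝ) + 1) = (x + 1 + 1) / (x + 1) := by
        field_simp
      rw [e1, e2, div_pow]
      push_cast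
      field_simp
  refine hs.of_nonneg_of_le (fun x => ?_) fun x => ?_
  · have := meixnerWeight_pos hγ hμ0 x
    positivity
  · have := meixnerWeight_pos hγ hμ0 x
    gcongr
    linarith

theorem summable_meixnerWeight_mul_eval (hγ : 0 < γ) (hμ0 : 0 < μ) (hμ1 : μ < 1) (p : ℝ[X]) :
    Summable fun x : ℕ => meixnerWeight γ μ x * p.eval (x : ℝ) := by
  have h := summable_sum fun k (_ : k ∈ Finset.range (p.natDegree + 1)) =>
    (summable_meixnerWeight_mul_pow hγ hμ0 hμ1 k).mul_left (p.coeff k)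
  refine h.congr fun x => ?_
  rw [eval_eq_sum_range, Finset.mul_sum]
  exact Finset.sum_congr rfl fun k _ => by ring

/-- Integration of polynomials against the Meixner weight. -/
noncomputable def meixnerFunctional (hγ : 0 < γ) (hμ0 : 0 < μ) (hμ1 : μ < 1) :
    ℝ[X] →ₗ[ℝ] ℝ where
  toFun p := ∑' x : ℕ, meixnerWeight γ μ x * p.eval (x : ℝ)
  map_add' p q := by
    rw [← (summable_meixnerWeight_mul_eval hγ hμ0 hμ1 p).tsum_add
      (summable_meixnerWeight_mul_eval hγ hμ0 hμ1 q)]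
    simp only [eval_add, mul_add]
  map_smul' c p := by
    rw [RingHom.id_apply, smul_eq_mul, ← tsum_mul_left]
    simp only [eval_smul, smul_eq_mul, mul_left_comm]

theorem meixnerFunctional_apply (hγ : 0 < γ) (hμ0 : 0 < μ) (hμ1 : μ < 1) (p : ℝ[X]) :
    meixnerFunctional hγ hμ0 hμ1 p = ∑' x : ℕ, meixnerWeight γ μ x * p.eval (x : ℝ) := rfl

/-- Summation by parts against the Meixner weight. -/
theorem meixnerFunctional_X_mul (hγ : 0 < γ) (hμ0 : 0 < μ) (hμ1 : μ < 1) (p : ℝ[X]) :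
    meixnerFunctional hγ hμ0 hμ1 (X * p) =
      μ * meixnerFunctional hγ hμ0 hμ1 ((C γ + X) * taylor 1 p) := by
  rw [meixnerFunctional_apply, meixnerFunctional_apply, ← tsum_mul_left,
    (summable_meixnerWeight_mul_eval hγ hμ0 hμ1 (X * p)).tsum_eq_zero_add]
  simp only [Nat.cast_zero, eval_mul, eval_X, zero_mul, mul_zero, zero_add, eval_add, eval_C,
    taylor_eval, Nat.cast_add, Nat.cast_one]
  refine tsum_congr fun x => ?_
  linear_combination p.eval ((x : ℝ) + 1) * meixnerWeight_succ (μ := μ) hγ x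

theorem eq_zero_of_meixnerFunctional_mul_self (hγ : 0 < γ) (hμ0 : 0 < μ) (hμ1 : μ < 1)
    {p : ℝ[X]} (hp : meixnerFunctional hγ hμ0 hμ1 ((C γ + X) * (p * p)) = 0) : p = 0 := by
  have hnonneg : ∀ x : ℕ,
      0 ≤ meixnerWeight γ μ x * ((C γ + X) * (p * p)).eval (x : ℝ) := fun x => by
    have := meixnerWeight_pos hγ hμ0 x
    have := mul_self_nonneg (p.eval (x : ℝ))
    simp only [eval_mul, eval_add, eval_C, eval_X]
    positivity
  have hs := (summable_meixnerWeight_mul_eval hγ hμ0 hμ1 ((C γ + X) * (p * p))).hasSum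
  rw [← meixnerFunctional_apply hγ hμ0 hμ1, hp, hasSum_zero_iff_of_nonneg hnonneg] at hs
  refine eq_zero_of_infinite_isRoot p
    ((Set.infinite_range_of_injective (Nat.cast_injective (R := ℝ))).mono ?_)
  rintro _ ⟨x, rfl⟩
  have hx := congrFun hs x
  have hw := (meixnerWeight_pos hγ hμ0 x).ne'
  have hγx : γ + (x : ℝ) ≠ 0 := by positivity
  simpa [hw, hγx] using hx

end Weight

/-- A linear functional vanishing on `p * X ^ k` for `k < m` vanishes on `p * q` for every
polynomial `q` of degree less than `m`. -/
theorem map_mul_eq_zero_of_degree_lt (L : ℝ[X] →ₗ[ℝ] ℝ) {p q : ℝ[X]} {m : ℕ}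
    (hp : ∀ k < m, L (p * X ^ k) = 0) (hq : q.degree < m) : L (p * q) = 0 := by
  rcases eq_or_ne q 0 with rfl | hq0
  · simp
  rw [q.as_sum_range' m ((natDegree_lt_iff_degree_lt hq0).2 hq),
    Finset.mul_sum, map_sum]
  refine Finset.sum_eq_zero fun k hk => ?_
  rw [← smul_X_eq_monomial, mul_smul_comm, map_smul, hp k (Finset.mem_range.1 hk), smul_zero]

theorem degree_taylor_sub_self_lt {p : ℝ[X]} (hp : p ≠ 0) (r : ℝ) :
    (taylor r p - p).degree < p.degree := by
  have h := degree_sub_lt_left (degree_taylor p r) (by simpa using hp) (leadingCoeff_taylor r p)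
  rwa [degree_taylor] at h

/-- The forward difference of a monic polynomial of degree `m + 1` has leading term
`(m + 1) X ^ m`. -/
theorem coeff_taylor_one_sub_self {p : ℝ[X]} {m : ℕ} (hp : p.Monic) (hdeg : p.natDegree = m + 1) :
    (taylor 1 p - p).coeff m = m + 1 := by
  have hlead : p.coeff (m + 1) = 1 := hdeg ▸ hp.coeff_natDegree
  have hh : (hasseDeriv m p).natDegree < 2 := by
    have := natDegree_hasseDeriv_le p m
    omega
  rw [coeff_sub, taylor_coeff, eval_eq_sum_range' hh]
  simp [Finset.sum_range_succ, hasseDeriv_coeff, add_comm 1 m, hlead]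

/-- Two-term recurrence for the forward differences of consecutive monic polynomials that are
orthogonal with respect to the Meixner weight. -/
theorem taylor_sub_self_eq_of_meixner_orthogonal {γ μ : ℝ} (hγ : 0 < γ) (hμ0 : 0 < μ)
    (hμ1 : μ < 1) {m : ℕ} {P R : ℝ[X]} (hP : P.Monic) (hPdeg : P.natDegree = m + 1)
    (hR : R.Monic) (hRdeg : R.natDegree = m)
    (hPorth : ∀ k < m + 1, meixnerFunctional hγ hμ0 hμ1 (P * X ^ k) = 0)
    (hRorth : ∀ k < m, meixnerFunctional hγ hμ0 hμ1 (R * X ^ k) = 0) :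
    taylor 1 P - P = ((m : ℝ) + 1) • R + (((m : ℝ) + 1) * (μ / (μ - 1))) • (taylor 1 R - R) := by
  set L := meixnerFunctional hγ hμ0 hμ1 with hL
  set a := μ / (μ - 1) with ha
  set Q := taylor 1 P - P - ((m : ℝ) + 1) • R - (((m : ℝ) + 1) * a) • (taylor 1 R - R) with hQ
  suffices hQ0 : Q = 0 by
    rw [hQ, sub_sub, sub_eq_zero] at hQ0
    exact hQ0
  have hPd : P.degree = (m + 1 : ℕ) := by rw [degree_eq_natDegree hP.ne_zero, hPdeg]
  have hRd : R.degree = m := by rw [degree_eq_natDegree hR.ne_zero, hRdeg]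
  have hRΔ := hRd ▸ degree_taylor_sub_self_lt hR.ne_zero 1
  have hPΔ := hPd ▸ degree_taylor_sub_self_lt hP.ne_zero 1
  have hQdeg : Q.degree < m := by
    rw [degree_lt_iff_coeff_zero]
    intro k hk
    have h1 : (taylor 1 R - R).coeff k = 0 := (degree_lt_iff_coeff_zero _ _).1 hRΔ k hk
    rw [hQ, coeff_sub, coeff_sub, coeff_smul, coeff_smul, h1]
    rcases hk.eq_or_lt with rfl | hk
    · have h2 : R.coeff m = 1 := hRdeg ▸ hR.coeff_natDegree
      rw [coeff_taylor_one_sub_self hP hPdeg, h2]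
      simp
    · rw [(degree_lt_iff_coeff_zero _ _).1 hPΔ k hk,
        coeff_eq_zero_of_natDegree_lt (hRdeg.trans_lt hk)]
      simp
  by_contra hQne
  apply hQne
  apply eq_zero_of_meixnerFunctional_mul_self hγ hμ0 hμ1
  rw [← hL]
  have hshift : ∀ p : ℝ[X],
      μ * L ((C γ + X) * (Q * taylor 1 p)) = L (p * (X * taylor (-1) Q)) := fun p => by
    have h := meixnerFunctional_X_mul hγ hμ0 hμ1 (p * taylor (-1) Q)
    rw [taylor_mul, taylor_taylor, add_neg_cancel, taylor_zero, ← hL] at h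
    rw [mul_comm Q, ← h]
    congr 1
    ring
  have hmul : ∀ (q r : ℝ[X]) (i : ℕ), q.degree ≤ 1 → r.degree < i →
      (q * r).degree < (i + 1 : ℕ) := fun q r i hq hr => by
    rw [degree_lt_iff_coeff_zero] at hr ⊢
    intro k hk
    rw [eq_X_add_C_of_degree_le_one hq, add_mul, coeff_add, mul_assoc, coeff_C_mul, coeff_C_mul]
    obtain ⟨k, rfl⟩ : ∃ l, k = l + 1 := ⟨k - 1, by omega⟩
    rw [coeff_X_mul, hr k (by omega), hr (k + 1) (by omega)]
    simp
  have hlin : (C γ + X).degree ≤ 1 := by rw [add_comm, degree_X_add_C]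
  have hP1 : L (P * (X * taylor (-1) Q)) = 0 :=
    map_mul_eq_zero_of_degree_lt L hPorth
      (hmul X _ m degree_X_le (by rwa [degree_taylor]))
  have hP2 : L (P * ((C γ + X) * Q)) = 0 :=
    map_mul_eq_zero_of_degree_lt L hPorth (hmul _ _ m hlin hQdeg)
  have hR1 : L (R * (X * taylor (-1) Q)) = L (R * ((C γ + X) * Q)) := by
    have hdiff : (X * (taylor (-1) Q - Q) - C γ * Q).degree < (m : WithBot ℕ) := by
      refine (degree_sub_le _ _).trans_lt (max_lt ?_ ?_)
      · obtain ⟨i, hi⟩ : ∃ i : ℕ, m = i + 1 :=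
          ⟨m - 1, by
            have := (natDegree_lt_iff_degree_lt hQne).2 hQdeg
            omega⟩
        rw [hi]
        refine hmul _ _ i degree_X_le ((degree_taylor_sub_self_lt hQne _).trans_le ?_)
        rw [degree_eq_natDegree hQne] at hQdeg ⊢
        rw [hi] at hQdeg
        exact_mod_cast Nat.lt_succ_iff.1 (by exact_mod_cast hQdeg)
      · rwa [degree_C_mul hγ.ne']
    have h := map_mul_eq_zero_of_degree_lt L hRorth hdiff
    rw [← sub_eq_zero, ← map_sub, ← h]
    congr 1
    ring
  have hexp : (C γ + X) * (Q * Q) = (C γ + X) * (Q * taylor 1 P) - P * ((C γ + X) * Q)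
      - ((m : ℝ) + 1) • (R * ((C γ + X) * Q))
      - (((m : ℝ) + 1) * a) • ((C γ + X) * (Q * taylor 1 R) - R * ((C γ + X) * Q)) := by
    nth_rewrite 2 [hQ]
    simp only [smul_eq_C_mul]
    ring
  have hPs := hshift P
  have hRs := hshift R
  rw [hP1] at hPs
  rw [hR1] at hRs
  have hPs' := (mul_eq_zero.1 hPs).resolve_left hμ0.ne'
  have hRs' : L ((C γ + X) * (Q * taylor 1 R)) = L (R * ((C γ + X) * Q)) / μ := by
    rw [eq_div_iff hμ0.ne', mul_comm, hRs]
  rw [hexp]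
  simp only [map_sub, map_smul, smul_eq_mul]
  rw [hPs', hP2, hRs', ha]
  have hμ : μ - 1 ≠ 0 := by linarith
  field_simp
  ring

/-- Expansion of the forward difference of the monic Meixner polynomial of degree `n`
in terms of the lower-degree monic Meixner polynomials of the same parameters. -/
theorem meixner_forward_difference_expansion
    (γ μ : ℝ) (hγ : 0 < γ) (hμ0 : 0 < μ) (hμ1 : μ < 1)
    (n : ℕ) (hn : 1 ≤ n) (M : ℕ → Polynomial ℝ)
    (hmonic : ∀ j ≤ n, (M j).Monic) (hdeg : ∀ j ≤ n, (M j).natDegree = j)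
    (horth : ∀ j ≤ n, ∀ k : ℕ, k < j →
      ∑' x : ℕ, (μ ^ x * Real.Gamma (γ + x) / (x.factorial * Real.Gamma γ)) *
        (M j).eval (x : ℝ) * (x : ℝ) ^ k = 0) :
    ∀ x : ℝ, (M n).eval (x + 1) - (M n).eval x =
      n * ∑ j ∈ Finset.range n,
        poch ((j : ℝ) + 1) (n - j - 1) * (μ / (μ - 1)) ^ (n - j - 1) * (M j).eval x := by
  have orth : ∀ j ≤ n, ∀ k < j, meixnerFunctional hγ hμ0 hμ1 (M j * X ^ k) = 0 := by
    intro j hj k hk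
    rw [meixnerFunctional_apply, ← horth j hj k hk]
    simp only [eval_mul, eval_pow, eval_X, meixnerWeight, mul_assoc]
  intro x
  suffices h : ∀ m ≤ n, (M m).eval (x + 1) - (M m).eval x =
      m * ∑ j ∈ Finset.range m,
        poch ((j : ℝ) + 1) (m - j - 1) * (μ / (μ - 1)) ^ (m - j - 1) * (M j).eval x from
    h n le_rfl
  intro m
  induction m with
  | zero =>
    intro h
    rw [(hmonic 0 h).natDegree_eq_zero.1 (hdeg 0 h)]
    simp
  | succ m ih =>
    intro h
    have hm : m ≤ n := by omega
    have hrec := congrArg (eval x) (taylor_sub_self_eq_of_meixner_orthogonal hγ hμ0 hμ1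
      (hmonic _ h) (hdeg _ h) (hmonic m hm) (hdeg m hm) (orth _ h) (orth m hm))
    simp only [eval_sub, eval_add, eval_smul, taylor_eval, smul_eq_mul] at hrec
    have hterm : ∀ j ∈ Finset.range m,
        poch ((j : ℝ) + 1) (m + 1 - j - 1) * (μ / (μ - 1)) ^ (m + 1 - j - 1) * (M j).eval x =
        m * (μ / (μ - 1)) *
          (poch ((j : ℝ) + 1) (m - j - 1) * (μ / (μ - 1)) ^ (m - j - 1) * (M j).eval x) := by
      intro j hj
      obtain ⟨i, rfl⟩ := Nat.exists_eq_add_of_lt (Finset.mem_range.1 hj)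
      rw [show j + i + 1 + 1 - j - 1 = i + 1 by omega, show j + i + 1 - j - 1 = i by omega,
        poch, Finset.prod_range_succ, ← poch, pow_succ]
      push_cast
      ring
    rw [hrec, ih hm, Finset.sum_range_succ, Finset.sum_congr rfl hterm, ← Finset.mul_sum]
    simp only [add_tsub_cancel_left, tsub_self, poch, Finset.range_zero, Finset.prod_empty,
      pow_zero, one_mul, Nat.cast_add, Nat.cast_one]
    ring
end

section
/- Let γ > 0 and 0 < μ < 1 be real and n ≥ 1 an integer, and set d_j² = j! (γ)_j μ^j / (1−μ)^{γ+2j} for each j ≥ 0. Then the finite-sum identity n² Σ_{j=0}^{n-1} ((j+1)_{n-j-1})² (μ/(μ−1))^{2(n-1-j)} d_j² = d_n² · n(1−μ)²/(μ(n+γ−1)) · Σ_{k=0}^{n-1} ((1−n)_k/(2−n−γ)_k) μ^k holds. -/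
theorem poch_succ (a : ℝ) (k : ℕ) : poch a (k + 1) = poch a k * (a + k) :=
  Finset.prod_range_succ _ _

theorem poch_add (a : ℝ) (j k : ℕ) : poch a (j + k) = poch a j * poch (a + j) k := by
  unfold poch
  rw [Finset.prod_range_add]
  congr 1
  refine Finset.prod_congr rfl fun i _ => ?_
  push_cast
  ring

theorem poch_one (k : ℕ) : poch 1 k = k.factorial := by
  induction k with
  | zero => simp [poch]
  | succ k ih =>
    rw [poch_succ, ih, Nat.factorial_succ]
    push_cast
    ring

theorem poch_pos {a : ℝ} (ha : 0 < a) (k : ℕ) : 0 < poch a k :=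
  Finset.prod_pos fun _ _ => by positivity

/-- Reversal of the factors of a Pochhammer symbol. -/
theorem poch_one_sub_sub (b : ℝ) (k : ℕ) : poch (1 - b - k) k = (-1) ^ k * poch b k := by
  unfold poch
  rw [← Finset.prod_range_reflect (fun i : ℕ => b + (i : ℝ)) k,
    ← Finset.card_range k, ← Finset.prod_const, Finset.card_range, ← Finset.prod_mul_distrib]
  refine Finset.prod_congr rfl fun i hi => ?_
  have hi' : i + 1 ≤ k := Finset.mem_range.mp hi
  rw [Nat.sub_sub, add_comm 1 i, Nat.cast_sub hi']
  push_cast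
  ring

/-- The `j`-th summand of the ladder sum equals the `k`-th hypergeometric summand,
for degree `j + k + 1`. -/
theorem meixner_ladder_term (γ μ : ℝ) (hγ : 0 < γ) (hμ0 : 0 < μ) (hμ1 : μ < 1) (j k : ℕ) :
    ((j + k + 1 : ℕ) : ℝ) ^ 2 * (poch ((j : ℝ) + 1) k ^ 2 * (μ / (μ - 1)) ^ (2 * k) *
        ((j.factorial : ℝ) * poch γ j * μ ^ j / (1 - μ) ^ (γ + 2 * (j : ℝ))))
    = ((j + k + 1).factorial : ℝ) * poch γ (j + k + 1) * μ ^ (j + k + 1) /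
        (1 - μ) ^ (γ + 2 * ((j + k + 1 : ℕ) : ℝ)) *
      (((j + k + 1 : ℕ) : ℝ) * (1 - μ) ^ 2 / (μ * (((j + k + 1 : ℕ) : ℝ) + γ - 1))) *
      (poch (1 - ((j + k + 1 : ℕ) : ℝ)) k / poch (2 - ((j + k + 1 : ℕ) : ℝ) - γ) k * μ ^ k) := by
  have hν : 0 < 1 - μ := sub_pos.mpr hμ1
  have hnum : poch (1 - ((j + k + 1 : ℕ) : ℝ)) k = (-1) ^ k * poch ((j : ℝ) + 1) k := by
    rw [← poch_one_sub_sub]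
    congr 1
    push_cast
    ring
  have hden : poch (2 - ((j + k + 1 : ℕ) : ℝ) - γ) k = (-1) ^ k * poch (γ + j) k := by
    rw [← poch_one_sub_sub]
    congr 1
    push_cast
    ring
  have hfac : ((j + k).factorial : ℝ) = j.factorial * poch ((j : ℝ) + 1) k := by
    rw [← poch_one, poch_add, poch_one, add_comm (1 : ℝ)]
  have hpow (i : ℕ) : (1 - μ) ^ (γ + 2 * (i : ℝ)) = (1 - μ) ^ γ * (1 - μ) ^ (2 * i) := by
    rw [Real.rpow_add hν, ← Real.rpow_natCast _ (2 * i)]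
    push_cast
    rfl
  have hsign : (μ / (μ - 1)) ^ (2 * k) = μ ^ (2 * k) / (1 - μ) ^ (2 * k) := by
    rw [← neg_sub 1 μ, div_neg, (even_two_mul k).neg_pow, div_pow]
  have hp := poch_pos (add_pos_of_pos_of_nonneg hγ j.cast_nonneg) k
  have hs : (0 : ℝ) < γ + j + k := by positivity
  have hr := Real.rpow_pos_of_pos hν γ
  have hshift : ((j + k + 1 : ℕ) : ℝ) + γ - 1 = γ + j + k := by
    push_cast
    ring
  rw [hnum, hden, hpow, hpow, hsign, hshift, poch_succ, poch_add, Nat.factorial_succ,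
    Nat.cast_mul, hfac, mul_div_mul_left _ _ (pow_ne_zero k (by norm_num : (-1 : ℝ) ≠ 0))]
  push_cast
  rw [← add_assoc γ]
  generalize (1 - μ) = ν at *
  field_simp
  ring

/-- Finite-sum identity converting the ladder-expansion form of the relative Fisher
information of the Meixner polynomials into its hypergeometric closed form, where
`d_j² = j! (γ)_j μ^j / (1-μ)^{γ+2j}` are the squared norms of the monic Meixner
polynomials. -/
theorem meixner_fisher_sum_identity
    (γ μ : ℝ) (hγ : 0 < γ) (hμ0 : 0 < μ) (hμ1 : μ < 1)
    (n : ℕ) (hn : 1 ≤ n) (d2 : ℕ → ℝ)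
    (hd2 : ∀ j : ℕ, d2 j = (j.factorial : ℝ) * poch γ j * μ ^ j /
      (1 - μ) ^ (γ + 2 * (j : ℝ))) :
    (n : ℝ) ^ 2 * ∑ j ∈ Finset.range n,
        (poch ((j : ℝ) + 1) (n - j - 1)) ^ 2 * (μ / (μ - 1)) ^ (2 * (n - 1 - j)) * d2 j
    = d2 n * ((n : ℝ) * (1 - μ) ^ 2 / (μ * ((n : ℝ) + γ - 1))) *
        ∑ k ∈ Finset.range n, poch (1 - (n : ℝ)) k / poch (2 - (n : ℝ) - γ) k * μ ^ k := by
  rw [← Finset.sum_range_reflect (fun k => poch (1 - (n : ℝ)) k / _ * μ ^ k),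
    Finset.mul_sum, Finset.mul_sum]
  refine Finset.sum_congr rfl fun j hj => ?_
  obtain ⟨k, rfl⟩ : ∃ k, n = j + k + 1 :=
    ⟨n - j - 1, by have := Finset.mem_range.mp hj; omega⟩
  rw [show j + k + 1 - j - 1 = k by omega, show j + k + 1 - 1 - j = k by omega, hd2, hd2]
  exact meixner_ladder_term γ μ hγ hμ0 hμ1 j k
end

section
/- Let N ≥ 2 be an integer, 0 < p < 1 real, and 1 ≤ n ≤ N−1 an integer. Then the relative Fisher information of the monic Kravchuk polynomial satisfies [Σ_{x=0}^N ω(x)(K_n^p(x+1,N) − K_n^p(x,N))²] / [Σ_{x=0}^N ω(x) K_n^p(x,N)²] = n/((N−n+1) p (1−p)) · Σ_{k=0}^{n-1} ((1−n)_k/(N−n+2)_k) (p/(p−1))^k, where the finite sum is the terminating hypergeometric series ₂F₁(1−n, 1; N−n+2; p/(p−1)). -/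
namespace Kravchuk

open Polynomial Finset

/-- The polynomial whose value at a natural number `x` is `x.choose k`. -/
noncomputable def binomialPoly (k : ℕ) : ℝ[X] :=
  C ((k.factorial : ℝ)⁻¹) * descPochhammer ℝ k

lemma eval_binomialPoly_natCast (k x : ℕ) : (binomialPoly k).eval (x : ℝ) = x.choose k := by
  have h : (k.factorial : ℝ) ≠ 0 := by positivity
  rw [binomialPoly, eval_C_mul, descPochhammer_eval_eq_descFactorial,
    Nat.descFactorial_eq_factorial_mul_choose]
  push_cast
  field_simp

lemma C_factorial_mul_binomialPoly (k : ℕ) :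
    C (k.factorial : ℝ) * binomialPoly k = descPochhammer ℝ k := by
  have h : (k.factorial : ℝ) ≠ 0 := by positivity
  rw [binomialPoly, ← mul_assoc, ← C_mul, mul_inv_cancel₀ h, C_1, one_mul]

lemma degree_C_mul_le (a : ℝ) (f : ℝ[X]) : (C a * f).degree ≤ f.degree := by
  rw [← smul_eq_C_mul]
  exact degree_smul_le a f

lemma degree_binomialPoly (k : ℕ) : (binomialPoly k).degree = k := by
  have h : ((k.factorial : ℝ)⁻¹) ≠ 0 := by positivity
  rw [binomialPoly, degree_C_mul h, degree_eq_natDegree (monic_descPochhammer ℝ k).ne_zero,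
    descPochhammer_natDegree]

/-- The forward difference `f(x) ↦ f(x + 1) - f(x)` on polynomials. -/
noncomputable def forwardDiff : ℝ[X] →ₗ[ℝ] ℝ[X] := taylor 1 - LinearMap.id

lemma eval_forwardDiff (f : ℝ[X]) (x : ℝ) :
    (forwardDiff f).eval x = f.eval (x + 1) - f.eval x := by
  simp [forwardDiff, taylor_eval]

lemma forwardDiff_binomialPoly_zero : forwardDiff (binomialPoly 0) = 0 := by
  simp [forwardDiff, binomialPoly]

lemma forwardDiff_binomialPoly_succ (k : ℕ) :
    forwardDiff (binomialPoly (k + 1)) = binomialPoly k := by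
  refine eq_of_infinite_eval_eq _ _
    ((Set.infinite_range_of_injective (Nat.cast_injective (R := ℝ))).mono ?_)
  rintro _ ⟨x, rfl⟩
  have h := eval_binomialPoly_natCast (k + 1) (x + 1)
  rw [Nat.choose_succ_succ'] at h
  push_cast at h
  simp only [Set.mem_ofPred_eq, eval_forwardDiff, eval_binomialPoly_natCast, h]
  ring

/-- Summation of a polynomial against the binomial weight on `{0, …, N}`. -/
noncomputable def binomialSum (N : ℕ) (p : ℝ) : ℝ[X] →ₗ[ℝ] ℝ :=
  ∑ x ∈ range (N + 1), ((N.choose x : ℝ) * p ^ x * (1 - p) ^ (N - x)) • leval (x : ℝ)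

lemma binomialSum_apply (N : ℕ) (p : ℝ) (f : ℝ[X]) :
    binomialSum N p f =
      ∑ x ∈ range (N + 1), (N.choose x : ℝ) * p ^ x * (1 - p) ^ (N - x) * f.eval (x : ℝ) := by
  simp [binomialSum, LinearMap.sum_apply, leval]

lemma eq_zero_of_binomialSum_mul_self {N : ℕ} {p : ℝ} (hp0 : 0 < p) (hp1 : p < 1) {f : ℝ[X]}
    (hf : f.degree < (N + 1 : ℕ)) (h : binomialSum N p (f * f) = 0) : f = 0 := by
  have hq : 0 < 1 - p := sub_pos.2 hp1
  rw [binomialSum_apply, sum_eq_zero_iff_of_nonneg] at h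
  · refine eq_zero_of_degree_lt_of_eval_finset_eq_zero
      ((range (N + 1)).map ⟨fun x : ℕ => (x : ℝ), Nat.cast_injective⟩) (by simpa using hf) ?_
    intro y hy
    obtain ⟨x, hx, rfl⟩ := mem_map.1 hy
    have hc : (0 : ℝ) < N.choose x := by
      exact_mod_cast Nat.choose_pos (Nat.lt_succ_iff.1 (mem_range.1 hx))
    have h0 := h x hx
    rw [mul_eq_zero, eval_mul, mul_self_eq_zero] at h0
    exact h0.resolve_left (by positivity)
  · intro x _
    rw [eval_mul]
    have := mul_self_nonneg (f.eval (x : ℝ))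
    positivity

/-- A linear functional killing `g * binomialPoly i` for `i < n` kills `g * f` for every `f` of
degree less than `n`. -/
lemma map_mul_eq_zero_of_binomialPoly {L : ℝ[X] →ₗ[ℝ] ℝ} {g : ℝ[X]} {n : ℕ}
    (h : ∀ i < n, L (g * binomialPoly i) = 0) {f : ℝ[X]} (hf : f.degree < n) :
    L (g * f) = 0 := by
  induction n generalizing f with
  | zero =>
    have : f = 0 := by simpa using hf
    simp [this]
  | succ n ih =>
    have hlt : (f - C (f.coeff n) * descPochhammer ℝ n).degree < n := by
      rw [degree_lt_iff_coeff_zero] at hf ⊢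
      intro m hm
      have hD : (descPochhammer ℝ n).natDegree = n := descPochhammer_natDegree ℝ n
      rcases hm.eq_or_lt with rfl | hm
      · have := (monic_descPochhammer ℝ n).coeff_natDegree
        rw [hD] at this
        simp [this]
      · rw [coeff_sub, coeff_C_mul, hf m hm, coeff_eq_zero_of_natDegree_lt (hD.trans_lt hm)]
        simp
    have h1 := ih (fun i hi => h i (hi.trans n.lt_succ_self)) hlt
    have h2 : g * f = g * (f - C (f.coeff n) * descPochhammer ℝ n) +
        (f.coeff n * n.factorial) • (g * binomialPoly n) := by
      rw [← C_factorial_mul_binomialPoly, smul_eq_C_mul, C_mul]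
      ring
    rw [h2, map_add, map_smul, h1, h n n.lt_succ_self, smul_zero, add_zero]

lemma map_mul_eq_zero_of_X_pow {L : ℝ[X] →ₗ[ℝ] ℝ} {g : ℝ[X]} {n : ℕ}
    (h : ∀ i < n, L (g * X ^ i) = 0) {f : ℝ[X]} (hf : f.degree < n) : L (g * f) = 0 := by
  rcases eq_or_ne f 0 with rfl | hf0
  · simp
  have hf' : f.natDegree < n := (natDegree_lt_iff_degree_lt hf0).2 hf
  rw [f.as_sum_range_C_mul_X_pow' hf', mul_sum, map_sum]
  refine sum_eq_zero fun i hi => ?_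
  rw [mul_left_comm, ← smul_eq_C_mul, map_smul, h i (mem_range.1 hi), smul_zero]

/-- The Kravchuk polynomial `K_j / j!`, the coefficient of `t ^ j` in
`(1 + (1 - p) t) ^ x (1 - p t) ^ (N - x)`, expanded in the binomial basis. -/
noncomputable def kravchuk (N : ℕ) (p : ℝ) (j : ℕ) : ℝ[X] :=
  ∑ k ∈ range (j + 1), C (((1 - C p * X : ℝ[X]) ^ (N - k)).coeff (j - k)) * binomialPoly k

lemma coeff_one_sub_pow_zero (p : ℝ) (m : ℕ) : ((1 - C p * X : ℝ[X]) ^ m).coeff 0 = 1 := by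
  simp [coeff_zero_eq_eval_zero]

lemma coeff_one_sub_pow_succ (p : ℝ) (m i : ℕ) :
    ((1 - C p * X : ℝ[X]) ^ (m + 1)).coeff (i + 1) =
      ((1 - C p * X : ℝ[X]) ^ m).coeff (i + 1) - p * ((1 - C p * X : ℝ[X]) ^ m).coeff i := by
  have : (1 - C p * X : ℝ[X]) ^ (m + 1) =
      (1 - C p * X) ^ m - C p * ((1 - C p * X) ^ m * X) := by ring
  rw [this, coeff_sub, coeff_C_mul, coeff_mul_X]

lemma kravchuk_eq_binomialPoly_add (N : ℕ) (p : ℝ) (j : ℕ) :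
    kravchuk N p j = (∑ k ∈ range j, C (((1 - C p * X : ℝ[X]) ^ (N - k)).coeff (j - k)) *
      binomialPoly k) + binomialPoly j := by
  rw [kravchuk, sum_range_succ, Nat.sub_self, coeff_one_sub_pow_zero, C_1, one_mul]

lemma degree_kravchuk_sub_lt (N : ℕ) (p : ℝ) (j : ℕ) :
    (kravchuk N p j - binomialPoly j).degree < j := by
  rw [kravchuk_eq_binomialPoly_add, add_sub_cancel_right]
  refine (degree_sum_le _ _).trans_lt ((Finset.sup_lt_iff (WithBot.bot_lt_coe j)).2 ?_)
  intro k hk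
  refine lt_of_le_of_lt ?_ (Nat.cast_lt.2 (mem_range.1 hk) : (k : WithBot ℕ) < j)
  exact (degree_C_mul_le _ _).trans (degree_binomialPoly k).le

lemma eval_kravchuk_natCast {N x : ℕ} (hx : x ≤ N) (p : ℝ) (j : ℕ) :
    (kravchuk N p j).eval (x : ℝ) =
      ((1 + C (1 - p) * X : ℝ[X]) ^ x * (1 - C p * X) ^ (N - x)).coeff j := by
  have h : (1 + C (1 - p) * X : ℝ[X]) ^ x * (1 - C p * X) ^ (N - x) =
      ∑ k ∈ range (x + 1), C (x.choose k : ℝ) * ((1 - C p * X) ^ (N - k) * X ^ k) := by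
    have : (1 + C (1 - p) * X : ℝ[X]) = X + (1 - C p * X) := by
      rw [C_sub, C_1]
      ring
    rw [this, add_pow, sum_mul]
    refine sum_congr rfl fun k hk => ?_
    have hk : k ≤ x := Nat.lt_succ_iff.1 (mem_range.1 hk)
    rw [show N - k = (x - k) + (N - x) by omega, pow_add, C_eq_natCast]
    ring
  rw [h, finsetSum_coeff, kravchuk, eval_finsetSum]
  simp only [eval_mul, eval_C, eval_binomialPoly_natCast, coeff_C_mul, coeff_mul_X_pow']
  have hj : range (j + 1) ⊆ range (j + x + 1) := range_mono (by omega)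
  have hx : range (x + 1) ⊆ range (j + x + 1) := range_mono (by omega)
  refine (sum_subset_zero_on_sdiff hj ?_ ?_).trans (sum_subset hx ?_).symm
  · intro k hk
    rw [mem_sdiff, mem_range, mem_range] at hk
    rw [if_neg (by omega), mul_zero]
  · intro k hk
    rw [if_pos (Nat.lt_succ_iff.1 (mem_range.1 hk)), mul_comm]
  · intro k _ hk
    rw [Nat.choose_eq_zero_of_lt (by rw [mem_range] at hk; omega), Nat.cast_zero, zero_mul]

lemma forwardDiff_kravchuk_zero (N : ℕ) (p : ℝ) : forwardDiff (kravchuk N p 0) = 0 := by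
  rw [kravchuk_eq_binomialPoly_add]
  simp [forwardDiff_binomialPoly_zero]

lemma forwardDiff_kravchuk (N : ℕ) (p : ℝ) (j : ℕ) :
    forwardDiff (kravchuk N p (j + 1)) = ∑ k ∈ range (j + 1),
      C (((1 - C p * X : ℝ[X]) ^ (N - (k + 1))).coeff (j - k)) * binomialPoly k := by
  rw [kravchuk, sum_range_succ', map_add, map_sum]
  simp only [← smul_eq_C_mul, map_smul, forwardDiff_binomialPoly_zero,
    forwardDiff_binomialPoly_succ, smul_zero, add_zero, Nat.add_sub_add_right]

lemma forwardDiff_kravchuk_succ {N j : ℕ} (hj : j ≤ N) (p : ℝ) :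
    forwardDiff (kravchuk N p (j + 1)) =
      kravchuk N p j + p • forwardDiff (kravchuk N p j) := by
  cases j with
  | zero =>
    rw [forwardDiff_kravchuk_zero, forwardDiff_kravchuk, kravchuk_eq_binomialPoly_add]
    simp [coeff_one_sub_pow_zero]
  | succ j =>
    rw [forwardDiff_kravchuk, forwardDiff_kravchuk, sum_range_succ,
      kravchuk_eq_binomialPoly_add N p (j + 1), Nat.sub_self, coeff_one_sub_pow_zero, C_1,
      one_mul, add_right_comm, smul_sum, ← sum_add_distrib]
    congr 1
    refine sum_congr rfl fun k hk => ?_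
    have hk : k ≤ j := Nat.lt_succ_iff.1 (mem_range.1 hk)
    rw [show N - k = N - (k + 1) + 1 by omega, show j + 1 - k = j - k + 1 by omega,
      coeff_one_sub_pow_succ, smul_eq_C_mul, C_sub, C_mul]
    ring

lemma degree_forwardDiff_kravchuk_lt (N : ℕ) (p : ℝ) (j : ℕ) :
    (forwardDiff (kravchuk N p j)).degree < j := by
  cases j with
  | zero => simp [forwardDiff_kravchuk_zero]
  | succ j =>
    rw [forwardDiff_kravchuk]
    refine (degree_sum_le _ _).trans_lt ((Finset.sup_lt_iff (WithBot.bot_lt_coe _)).2 ?_)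
    intro k hk
    refine lt_of_le_of_lt ?_ (Nat.cast_lt.2 (mem_range.1 hk) : (k : WithBot ℕ) < (j + 1 : ℕ))
    exact (degree_C_mul_le _ _).trans (degree_binomialPoly k).le

lemma sum_choose_mul_generating {N i : ℕ} (hi : i ≤ N) (p : ℝ) :
    ∑ x ∈ range (N + 1), C ((N.choose x : ℝ) * p ^ x * (1 - p) ^ (N - x) * x.choose i) *
      ((1 + C (1 - p) * X : ℝ[X]) ^ x * (1 - C p * X) ^ (N - x)) =
    C (N.choose i * p ^ i) * (1 + C (1 - p) * X) ^ i := by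
  obtain ⟨m, rfl⟩ := Nat.exists_eq_add_of_le hi
  rw [add_assoc, sum_range_add, sum_eq_zero, zero_add]
  · have h1 : (C p * (1 + C (1 - p) * X) + C (1 - p) * (1 - C p * X) : ℝ[X]) ^ m = 1 := by
      rw [C_sub, C_1]
      ring
    rw [add_pow] at h1
    refine Eq.trans ?_ ((congrArg (C (((i + m).choose i : ℝ) * p ^ i) *
      (1 + C (1 - p) * X) ^ i * ·) h1).trans (mul_one _))
    rw [mul_sum]
    refine sum_congr rfl fun y hy => ?_
    have hy : y ≤ m := Nat.lt_succ_iff.1 (mem_range.1 hy)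
    have hc : (((i + m).choose (i + y) : ℝ) * (i + y).choose i) =
        (i + m).choose i * m.choose y := by
      have := Nat.choose_mul (n := i + m) (k := i + y) (s := i) (by omega)
      simp only [Nat.add_sub_cancel_left] at this
      exact_mod_cast this
    have hc' := congrArg (C : ℝ → ℝ[X]) hc
    rw [show i + m - (i + y) = m - y by omega]
    simp only [C_mul, C_pow, mul_pow, pow_add, ← C_eq_natCast] at hc' ⊢
    linear_combination (C p ^ i * C p ^ y * C (1 - p) ^ (m - y) *
      ((1 + C (1 - p) * X) ^ i * (1 + C (1 - p) * X) ^ y * (1 - C p * X) ^ (m - y))) * hc'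
  · intro x hx
    simp [Nat.choose_eq_zero_of_lt (mem_range.1 hx)]

lemma binomialSum_kravchuk_mul_binomialPoly {N i : ℕ} (hi : i ≤ N) (p : ℝ) (j : ℕ) :
    binomialSum N p (kravchuk N p j * binomialPoly i) =
      N.choose i * p ^ i * ((1 - p) ^ j * i.choose j) := by
  have h := congrArg (coeff · j) (sum_choose_mul_generating hi p)
  have h2 : ((1 + C (1 - p) * X : ℝ[X]) ^ i).coeff j = (1 - p) ^ j * i.choose j := by
    have : (1 + C (1 - p) * X : ℝ[X]) ^ i = ((1 + X) ^ i).comp (C (1 - p) * X) := by simp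
    rw [this, comp_C_mul_X_coeff, coeff_one_add_X_pow, mul_comm]
  simp only [finsetSum_coeff, coeff_C_mul, h2] at h
  rw [← h, binomialSum_apply]
  refine sum_congr rfl fun x hx => ?_
  rw [eval_mul, eval_binomialPoly_natCast,
    eval_kravchuk_natCast (Nat.lt_succ_iff.1 (mem_range.1 hx))]
  ring

lemma binomialSum_kravchuk_mul_eq_zero {N j : ℕ} (hj : j ≤ N) (p : ℝ) {f : ℝ[X]}
    (hf : f.degree < j) : binomialSum N p (kravchuk N p j * f) = 0 := by
  refine map_mul_eq_zero_of_binomialPoly (fun i hi => ?_) hf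
  rw [binomialSum_kravchuk_mul_binomialPoly (hi.le.trans hj), Nat.choose_eq_zero_of_lt hi]
  simp

lemma binomialSum_kravchuk_mul_self {N j : ℕ} (hj : j ≤ N) (p : ℝ) :
    binomialSum N p (kravchuk N p j * kravchuk N p j) = N.choose j * (p * (1 - p)) ^ j := by
  have h := binomialSum_kravchuk_mul_eq_zero hj p (degree_kravchuk_sub_lt N p j)
  rw [mul_sub, map_sub, binomialSum_kravchuk_mul_binomialPoly hj, sub_eq_zero] at h
  rw [h, Nat.choose_self, mul_pow]
  push_cast
  ring

lemma binomialSum_forwardDiff_kravchuk_sq {N n : ℕ} (hn : n ≤ N + 1) (p : ℝ) :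
    binomialSum N p (forwardDiff (kravchuk N p n) * forwardDiff (kravchuk N p n)) =
      ∑ k ∈ range n, N.choose (n - 1 - k) * (p * (1 - p)) ^ (n - 1 - k) * p ^ (2 * k) := by
  induction n with
  | zero => simp [forwardDiff_kravchuk_zero]
  | succ n ih =>
    have hnN : n ≤ N := Nat.succ_le_succ_iff.1 hn
    have h0 := binomialSum_kravchuk_mul_eq_zero hnN p (degree_forwardDiff_kravchuk_lt N p n)
    have hsq : forwardDiff (kravchuk N p (n + 1)) * forwardDiff (kravchuk N p (n + 1)) =
        kravchuk N p n * kravchuk N p n +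
        (2 * p) • (kravchuk N p n * forwardDiff (kravchuk N p n)) +
        (p ^ 2) • (forwardDiff (kravchuk N p n) * forwardDiff (kravchuk N p n)) := by
      rw [forwardDiff_kravchuk_succ hnN]
      simp only [smul_eq_C_mul, C_mul, C_pow, C_ofNat]
      ring
    rw [hsq, map_add, map_add, map_smul, map_smul, h0, ih (by omega),
      binomialSum_kravchuk_mul_self hnN, sum_range_succ', smul_zero, add_zero, add_comm,
      smul_eq_mul, mul_sum]
    congr 1
    · refine sum_congr rfl fun k _ => ?_
      rw [show n + 1 - 1 - (k + 1) = n - 1 - k by omega]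
      ring
    · simp

lemma eq_factorial_smul_kravchuk {N n : ℕ} (hn : n ≤ N) {p : ℝ} (hp0 : 0 < p) (hp1 : p < 1)
    {K : ℝ[X]} (hmonic : K.Monic) (hdeg : K.natDegree = n)
    (horth : ∀ k < n, binomialSum N p (K * X ^ k) = 0) :
    K = (n.factorial : ℝ) • kravchuk N p n := by
  set R := K - (n.factorial : ℝ) • kravchuk N p n with hR
  have hlt : R.degree < n := by
    have h1 : (K - descPochhammer ℝ n).degree < n := by
      have hK : K.degree = n := by rw [degree_eq_natDegree hmonic.ne_zero, hdeg]
      have hD : (descPochhammer ℝ n).degree = n := by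
        rw [degree_eq_natDegree (monic_descPochhammer ℝ n).ne_zero, descPochhammer_natDegree]
      rw [← hK]
      exact degree_sub_lt_left (hK.trans hD.symm) hmonic.ne_zero
        (by rw [hmonic.leadingCoeff, (monic_descPochhammer ℝ n).leadingCoeff])
    have h2 : R = (K - descPochhammer ℝ n) -
        C (n.factorial : ℝ) * (kravchuk N p n - binomialPoly n) := by
      rw [← C_factorial_mul_binomialPoly, hR, smul_eq_C_mul]
      ring
    rw [h2]
    exact (degree_sub_le _ _).trans_lt (max_lt h1
      ((degree_C_mul_le _ _).trans_lt (degree_kravchuk_sub_lt N p n)))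
  have hzero : binomialSum N p (R * R) = 0 := by
    nth_rw 1 [hR]
    rw [sub_mul, map_sub, smul_mul_assoc, map_smul, binomialSum_kravchuk_mul_eq_zero hn p hlt,
      map_mul_eq_zero_of_X_pow horth hlt, smul_zero, sub_zero]
  exact sub_eq_zero.1 (eq_zero_of_binomialSum_mul_self hp0 hp1
    (hlt.trans (Nat.cast_lt.2 (Nat.lt_succ_of_le hn))) hzero)

lemma choose_ratio_eq_poch {N n : ℕ} (hn : n ≤ N) {p : ℝ} (hp0 : 0 < p) (hp1 : p < 1) {k : ℕ}
    (hk : k < n) :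
    N.choose (n - 1 - k) * (p * (1 - p)) ^ (n - 1 - k) * p ^ (2 * k) =
      n / (((N : ℝ) - n + 1) * p * (1 - p)) *
        (poch (1 - (n : ℝ)) k / poch ((N : ℝ) - n + 2) k * (p / (p - 1)) ^ k) *
        (N.choose n * (p * (1 - p)) ^ n) := by
  have hq : 0 < 1 - p := sub_pos.2 hp1
  have hq' : p - 1 ≠ 0 := by linarith
  have hnN : (n : ℝ) ≤ N := Nat.cast_le.2 hn
  have hM : (0 : ℝ) < N - n + 1 := by linarith
  induction k with
  | zero =>
    obtain ⟨m, rfl⟩ : ∃ m, n = m + 1 := ⟨n - 1, by omega⟩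
    have hc : (N.choose (m + 1) : ℝ) * (m + 1) = N.choose m * (N - m) := by
      have := Nat.choose_succ_right_eq N m
      rw [← Nat.cast_sub (by omega)]
      exact_mod_cast this
    simp only [poch, range_zero, prod_empty, Nat.add_sub_cancel, Nat.sub_zero, pow_zero,
      Nat.mul_zero, pow_succ]
    push_cast at hM ⊢
    field_simp
    linear_combination (-1 : ℝ) * hc
  | succ k ih =>
    obtain ⟨m, rfl⟩ : ∃ m, n = m + k + 2 := ⟨n - k - 2, by omega⟩
    have ih := ih (by omega)
    rw [show m + k + 2 - 1 - k = m + 1 by omega] at ih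
    rw [show m + k + 2 - 1 - (k + 1) = m by omega]
    have hc : (N.choose (m + 1) : ℝ) * (m + 1) = N.choose m * (N - m) := by
      have := Nat.choose_succ_right_eq N m
      rw [← Nat.cast_sub (by omega)]
      exact_mod_cast this
    have hNm : (0 : ℝ) < N - m := by
      push_cast at hnN
      have : (0 : ℝ) ≤ k := Nat.cast_nonneg k
      linarith
    have hstep : (N.choose m : ℝ) * (p * (1 - p)) ^ m * p ^ (2 * (k + 1)) =
        (N.choose (m + 1) * (p * (1 - p)) ^ (m + 1) * p ^ (2 * k)) *
          ((m + 1) / (N - m) * (p / (1 - p))) := by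
      field_simp
      linear_combination (-(p * (p * (1 - p)) ^ (m + 1) * p ^ (2 * k))) * hc
    have hs : poch (1 - ((m + k + 2 : ℕ) : ℝ)) (k + 1) =
        poch (1 - ((m + k + 2 : ℕ) : ℝ)) k * (-(m + 1)) := by
      rw [poch, prod_range_succ, ← poch]
      push_cast
      ring
    have ht : poch ((N : ℝ) - (m + k + 2 : ℕ) + 2) (k + 1) =
        poch ((N : ℝ) - (m + k + 2 : ℕ) + 2) k * (N - m) := by
      rw [poch, prod_range_succ, ← poch]
      push_cast
      ring
    have hr : p / (1 - p) = -(p / (p - 1)) := by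
      rw [← div_neg, neg_sub]
    rw [hstep, ih, hs, ht, hr, mul_div_mul_comm, pow_succ]
    ring

end Kravchuk

/-- The relative Fisher information of the monic Kravchuk polynomial of degree
`1 ≤ n ≤ N-1` with respect to the binomial weight `ω(x) = C(N,x) p^x (1-p)^{N-x}`
equals `n/((N-n+1)p(1-p)) · ₂F₁(1-n, 1; N-n+2; p/(p-1))`. -/
theorem kravchuk_relative_fisher
    (N : ℕ) (hN : 2 ≤ N) (p : ℝ) (hp0 : 0 < p) (hp1 : p < 1)
    (n : ℕ) (hn1 : 1 ≤ n) (hnN : n ≤ N - 1)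
    (K : Polynomial ℝ) (hmonic : K.Monic) (hdeg : K.natDegree = n)
    (horth : ∀ k : ℕ, k < n →
      ∑ x ∈ Finset.range (N + 1), (N.choose x : ℝ) * p ^ x * (1 - p) ^ (N - x) *
        K.eval (x : ℝ) * (x : ℝ) ^ k = 0) :
    (∑ x ∈ Finset.range (N + 1), (N.choose x : ℝ) * p ^ x * (1 - p) ^ (N - x) *
        (K.eval ((x : ℝ) + 1) - K.eval (x : ℝ)) ^ 2) /
      (∑ x ∈ Finset.range (N + 1), (N.choose x : ℝ) * p ^ x * (1 - p) ^ (N - x) *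
        (K.eval (x : ℝ)) ^ 2)
    = n / (((N : ℝ) - n + 1) * p * (1 - p)) *
        ∑ k ∈ Finset.range n,
          poch (1 - (n : ℝ)) k / poch ((N : ℝ) - n + 2) k * (p / (p - 1)) ^ k := by
  have hnN' : n ≤ N := by omega
  have hK := Kravchuk.eq_factorial_smul_kravchuk hnN' hp0 hp1 hmonic hdeg fun k hk => by
    rw [Kravchuk.binomialSum_apply, ← horth k hk]
    simp [mul_assoc]
  have hf : (n.factorial : ℝ) ≠ 0 := by positivity
  have hq : 0 < 1 - p := sub_pos.2 hp1
  have hc : (0 : ℝ) < N.choose n := by exact_mod_cast Nat.choose_pos hnN'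
  have hden : ∑ x ∈ Finset.range (N + 1), (N.choose x : ℝ) * p ^ x * (1 - p) ^ (N - x) *
      (K.eval (x : ℝ)) ^ 2 = (n.factorial : ℝ) ^ 2 * (N.choose n * (p * (1 - p)) ^ n) := by
    rw [← Kravchuk.binomialSum_kravchuk_mul_self hnN', Kravchuk.binomialSum_apply,
      Finset.mul_sum]
    refine Finset.sum_congr rfl fun x _ => ?_
    rw [hK, Polynomial.eval_smul, Polynomial.eval_mul, smul_eq_mul]
    ring
  have hnum : ∑ x ∈ Finset.range (N + 1), (N.choose x : ℝ) * p ^ x * (1 - p) ^ (N - x) *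
      (K.eval ((x : ℝ) + 1) - K.eval (x : ℝ)) ^ 2 = (n.factorial : ℝ) ^ 2 *
        ∑ k ∈ Finset.range n,
          N.choose (n - 1 - k) * (p * (1 - p)) ^ (n - 1 - k) * p ^ (2 * k) := by
    rw [← Kravchuk.binomialSum_forwardDiff_kravchuk_sq (by omega), Kravchuk.binomialSum_apply,
      Finset.mul_sum]
    refine Finset.sum_congr rfl fun x _ => ?_
    rw [hK, Polynomial.eval_mul, Kravchuk.eval_forwardDiff]
    simp only [Polynomial.eval_smul, smul_eq_mul]
    ring
  rw [hden, hnum, mul_div_mul_left _ _ (pow_ne_zero 2 hf), div_eq_iff (by positivity),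
    Finset.mul_sum, Finset.sum_mul]
  exact Finset.sum_congr rfl fun k hk =>
    Kravchuk.choose_ratio_eq_poch hnN' hp0 hp1 (Finset.mem_range.1 hk)
end

section
/- Let N ≥ 2 be an integer, 0 < p < 1 real, and 1 ≤ n ≤ N−1 an integer, and set d_j² = j! N! p^j (1−p)^j / (N−j)! for 0 ≤ j ≤ N. Then the finite-sum identity n² Σ_{j=0}^{n-1} ((j+1)_{n-j-1})² p^{2(n-1-j)} d_j² = d_n² · n/((N−n+1) p (1−p)) · Σ_{k=0}^{n-1} ((1−n)_k/(N−n+2)_k) (p/(p−1))^k holds. -/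
lemma factorial_mul_poch_add_one (j k : ℕ) :
    (j.factorial : ℝ) * poch ((j : ℝ) + 1) k = ((j + k).factorial : ℝ) := by
  induction k with
  | zero => simp [poch]
  | succ k ih =>
    have hs : poch ((j : ℝ) + 1) (k + 1) = poch ((j : ℝ) + 1) k * ((j : ℝ) + 1 + k) := by
      simp [poch, Finset.prod_range_succ]
    rw [hs, ← mul_assoc, ih, ← add_assoc, Nat.factorial_succ]
    push_cast
    ring

lemma factorial_mul_poch_neg_add (j k : ℕ) :
    (j.factorial : ℝ) * poch (-((j : ℝ) + k)) k = (-1) ^ k * ((j + k).factorial : ℝ) := by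
  induction k with
  | zero => simp [poch]
  | succ k ih =>
    have hs : poch (-((j : ℝ) + (k + 1 : ℕ))) (k + 1)
        = poch (-((j : ℝ) + k)) k * (-((j : ℝ) + k + 1)) := by
      unfold poch
      rw [Finset.prod_range_succ']
      congr 1
      · refine Finset.prod_congr rfl fun i _ => ?_
        push_cast
        ring
      · push_cast
        ring
    rw [hs, ← mul_assoc, ih, ← add_assoc, Nat.factorial_succ]
    push_cast
    ring

/-- The `j`-th ladder term (with `n = j + k + 1`, `N = M + n`) equals the `k`-th
hypergeometric term. -/
lemma kravchuk_ladder_term_eq (M j k : ℕ) {p : ℝ} (hp0 : p ≠ 0) (hp1 : 1 - p ≠ 0) (F : ℝ) :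
    ((j : ℝ) + k + 1) ^ 2 * (poch ((j : ℝ) + 1) k ^ 2 * p ^ (2 * k) *
        ((j.factorial : ℝ) * F * p ^ j * (1 - p) ^ j / ((M + 1 + k).factorial : ℝ)))
    = ((j + k + 1).factorial : ℝ) * F * p ^ (j + k + 1) * (1 - p) ^ (j + k + 1) /
          (M.factorial : ℝ) * (((j : ℝ) + k + 1) / (((M : ℝ) + 1) * p * (1 - p))) *
        (poch (-((j : ℝ) + k)) k / poch (((M + 1 : ℕ) : ℝ) + 1) k * (p / (p - 1)) ^ k) := by
  have hj : (j.factorial : ℝ) ≠ 0 := by positivity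
  have hM : (M.factorial : ℝ) ≠ 0 := by positivity
  have hM1 : (M : ℝ) + 1 ≠ 0 := by positivity
  have hMs : ((M + 1).factorial : ℝ) = ((M : ℝ) + 1) * M.factorial := by
    rw [Nat.factorial_succ]
    push_cast
    ring
  have hMk : ((M + 1 + k).factorial : ℝ) ≠ 0 := by positivity
  have ladder := eq_div_of_mul_eq hj ((mul_comm _ _).trans (factorial_mul_poch_add_one j k))
  have lower := eq_div_of_mul_eq (by positivity)
    ((mul_comm _ _).trans (factorial_mul_poch_add_one (M + 1) k))
  have upper := eq_div_of_mul_eq hj ((mul_comm _ _).trans (factorial_mul_poch_neg_add j k))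
  have hpow : (p / (p - 1)) ^ k = (-1) ^ k * p ^ k / (1 - p) ^ k := by
    rw [← mul_pow, ← div_pow, ← neg_sub 1 p, div_neg, neg_one_mul, neg_div]
  have hsign : (-1 : ℝ) ^ (2 * k) = 1 := by rw [pow_mul, neg_one_sq, one_pow]
  rw [ladder, lower, upper, hpow, hMs, Nat.factorial_succ (j + k)]
  push_cast
  field_simp
  rw [← pow_mul, mul_comm k 2, hsign]
  ring

/-- Finite-sum identity converting the ladder-expansion form of the relative Fisher
information of the Kravchuk polynomials into its hypergeometric closed form, where
`d_j² = j! N! p^j (1-p)^j / (N-j)!` are the squared norms of the monic Kravchuk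
polynomials. -/
theorem kravchuk_fisher_sum_identity
    (N : ℕ) (hN : 2 ≤ N) (p : ℝ) (hp0 : 0 < p) (hp1 : p < 1)
    (n : ℕ) (hn1 : 1 ≤ n) (hnN : n ≤ N - 1)
    (d2 : ℕ → ℝ)
    (hd2 : ∀ j ≤ N, d2 j = (j.factorial : ℝ) * (N.factorial : ℝ) * p ^ j * (1 - p) ^ j /
      ((N - j).factorial : ℝ)) :
    (n : ℝ) ^ 2 * ∑ j ∈ Finset.range n,
        (poch ((j : ℝ) + 1) (n - j - 1)) ^ 2 * p ^ (2 * (n - 1 - j)) * d2 j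
    = d2 n * ((n : ℝ) / (((N : ℝ) - n + 1) * p * (1 - p))) *
        ∑ k ∈ Finset.range n,
          poch (1 - (n : ℝ)) k / poch ((N : ℝ) - n + 2) k * (p / (p - 1)) ^ k := by
  obtain ⟨M, rfl⟩ : ∃ M, N = M + n := ⟨N - n, by omega⟩
  rw [Finset.mul_sum, Finset.mul_sum, ← Finset.sum_range_reflect]
  refine Finset.sum_congr rfl fun k hk => ?_
  obtain ⟨j, rfl⟩ : ∃ j, n = j + k + 1 :=
    ⟨n - k - 1, by have := Finset.mem_range.1 hk; omega⟩
  have hj : j + k + 1 - 1 - k = j := by omega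
  have hk1 : j + k + 1 - j - 1 = k := by omega
  have hk2 : j + k + 1 - 1 - j = k := by omega
  have hMk : M + (j + k + 1) - j = M + 1 + k := by omega
  have hM : M + (j + k + 1) - (j + k + 1) = M := by omega
  rw [hj, hk1, hk2, hd2 j (by omega), hd2 (j + k + 1) (by omega), hMk, hM]
  convert kravchuk_ladder_term_eq M j k hp0.ne' (sub_pos.2 hp1).ne' _ using 4 <;>
    push_cast <;> ring_nf
end

section
/- Let N ≥ 2 be an integer and 0 < p < 1 real. Then the relative Fisher information of the Kravchuk polynomial of maximal degree n = N−1 satisfies (N−1)/(2 p (1−p)) · Σ_{k=0}^{N-2} ((2−N)_k/(3)_k) (p/(p−1))^k = ((1−p)^{1−N} + (1−N)p − 1)/(N p³); that is, I_ω[K_{N-1}^p(N)] = ((1−p)^{1−N} + (1−N)p − 1)/(N p³). -/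
/-- A Pochhammer symbol at a nonpositive integer, expressed through a binomial coefficient. -/
theorem poch_neg_natCast (m k : ℕ) :
    ((m : ℝ) + 1) * (m + 2) * poch (-(m : ℝ)) k =
      2 * (-1) ^ k * ((m + 2).choose (k + 2) : ℝ) * poch 3 k := by
  induction k with
  | zero =>
    have h : ((m + 2).choose 2 : ℝ) = (m + 2) * (m + 1) / 2 := by
      rw [Nat.cast_choose_two]; push_cast; ring
    simp only [poch, Finset.range_zero, Finset.prod_empty, zero_add, h]
    ring
  | succ k ih =>
    have h : ((m + 2).choose (k + 3) : ℝ) * (k + 3) = (m + 2).choose (k + 2) * (m - k) := by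
      rcases le_or_gt k m with hk | hk
      · have := Nat.choose_succ_right_eq (m + 2) (k + 2)
        rw [Nat.add_sub_add_right] at this
        rw [← Nat.cast_sub hk]
        exact_mod_cast this
      · rw [Nat.choose_eq_zero_of_lt (by omega : m + 2 < k + 3),
          Nat.choose_eq_zero_of_lt (by omega : m + 2 < k + 2)]
        simp
    simp only [poch, Finset.prod_range_succ] at ih ⊢
    rw [← mul_assoc, ih, show k + 1 + 2 = k + 3 from rfl]
    linear_combination 2 * (-1) ^ k * (∏ i ∈ Finset.range k, (3 + (i : ℝ))) * h

/-- The binomial theorem with the terms of degree `0` and `1` split off. -/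
theorem sq_mul_sum_choose_add_two (m : ℕ) (y : ℝ) :
    y ^ 2 * ∑ k ∈ Finset.range (m + 1), ((m + 2).choose (k + 2) : ℝ) * y ^ k =
      (1 + y) ^ (m + 2) - 1 - (m + 2) * y := by
  have h := add_pow y 1 (m + 2)
  rw [Finset.sum_range_succ', Finset.sum_range_succ'] at h
  simp only [one_pow, mul_one, zero_add, pow_zero, pow_one, Nat.choose_zero_right,
    Nat.choose_one_right, Nat.cast_one, Nat.cast_add, Nat.cast_ofNat] at h
  rw [add_comm 1 y, h, Finset.mul_sum]
  have hs : ∑ k ∈ Finset.range (m + 1), y ^ 2 * (((m + 2).choose (k + 2) : ℝ) * y ^ k) =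
      ∑ k ∈ Finset.range (m + 1), y ^ (k + 1 + 1) * ((m + 2).choose (k + 1 + 1) : ℝ) :=
    Finset.sum_congr rfl fun k _ => by ring
  rw [hs]
  ring

/-- The relative Fisher information of the monic Kravchuk polynomial of maximal
degree `n = N-1` equals `((1-p)^{1-N} + (1-N)p - 1)/(N p³)`. -/
theorem kravchuk_fisher_maximal_degree
    (N : ℕ) (hN : 2 ≤ N) (p : ℝ) (hp0 : 0 < p) (hp1 : p < 1) :
    ((N : ℝ) - 1) / (2 * p * (1 - p)) *
      ∑ k ∈ Finset.range (N - 1),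
        poch (2 - (N : ℝ)) k / poch 3 k * (p / (p - 1)) ^ k
    = ((1 - p) ^ ((1 : ℤ) - (N : ℤ)) + (1 - (N : ℝ)) * p - 1) / ((N : ℝ) * p ^ 3) := by
  obtain ⟨m, rfl⟩ := Nat.exists_eq_add_of_le' hN
  have hq : 1 - p ≠ 0 := by linarith
  have hp : p ≠ 0 := hp0.ne'
  have hm1 : (m : ℝ) + 1 ≠ 0 := by positivity
  have hm2 : (m : ℝ) + 2 ≠ 0 := by positivity
  have hterm (k : ℕ) : poch (2 - ((m + 2 : ℕ) : ℝ)) k / poch 3 k * (p / (p - 1)) ^ k =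
      2 / (((m : ℝ) + 1) * (m + 2)) *
        (((m + 2).choose (k + 2) : ℝ) * (p / (1 - p)) ^ k) := by
    have h3 : poch 3 k ≠ 0 := Finset.prod_ne_zero_iff.mpr fun i _ => by positivity
    have hpoch : poch (2 - ((m + 2 : ℕ) : ℝ)) k / poch 3 k =
        2 / (((m : ℝ) + 1) * (m + 2)) * ((-1) ^ k * (m + 2).choose (k + 2)) := by
      rw [show (2 : ℝ) - ((m + 2 : ℕ) : ℝ) = -m by push_cast; ring]
      field_simp
      linear_combination poch_neg_natCast m k
    have hsign : p / (1 - p) = -1 * (p / (p - 1)) := by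
      rw [← neg_sub p 1, div_neg, neg_one_mul]
    rw [hpoch, hsign, mul_pow]
    ring
  have hsum := sq_mul_sum_choose_add_two m (p / (1 - p))
  rw [show 1 + p / (1 - p) = (1 - p)⁻¹ by field_simp; ring, inv_pow] at hsum
  rw [Finset.sum_congr rfl fun k _ => hterm k, ← Finset.mul_sum,
    show m + 2 - 1 = m + 1 from rfl]
  have hz : (1 - p) ^ ((1 : ℤ) - ((m + 2 : ℕ) : ℤ)) = (1 - p) * ((1 - p) ^ (m + 2))⁻¹ := by
    rw [zpow_sub₀ hq, zpow_one, zpow_natCast, div_eq_mul_inv]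
  rw [hz]
  generalize ((1 - p) ^ (m + 2))⁻¹ = u at hsum ⊢
  generalize ∑ k ∈ Finset.range (m + 1), ((m + 2).choose (k + 2) : ℝ) * (p / (1 - p)) ^ k = S
    at hsum ⊢
  push_cast
  field_simp at hsum ⊢
  linear_combination ((m : ℝ) + 1) * hsum
end

section
/- Let 0 < μ < 1 be a fixed real number and n ≥ 1 a fixed integer, and for γ > 0 define F(γ) = n(1−μ)²/(μ(n+γ−1)) · Σ_{k=0}^{n-1} ((1−n)_k/(2−n−γ)_k) μ^k. Then lim_{γ→0⁺} γ·F(γ) = n(1−μ)² μ^{n−2}; that is, the relative Fisher information of the Meixner polynomials diverges as F(γ) ~ (n/γ)(1−μ)² μ^{n−2} when γ → 0. -/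
theorem poch_succ_left (a : ℝ) (k : ℕ) : poch a (k + 1) = a * poch (a + 1) k := by
  unfold poch
  rw [Finset.prod_range_succ', mul_comm]
  congr 1
  · simp
  · refine Finset.prod_congr rfl fun i _ => ?_
    push_cast
    ring

theorem continuous_poch (k : ℕ) : Continuous fun a : ℝ => poch a k := by
  unfold poch
  fun_prop

theorem poch_neg_natCast_ne_zero {m k : ℕ} (h : k ≤ m) : poch (-(m : ℝ)) k ≠ 0 := by
  refine Finset.prod_ne_zero_iff.2 fun i hi => ?_
  have : (i : ℝ) < m := by exact_mod_cast (Finset.mem_range.1 hi).trans_le h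
  linarith

/-- Only the top term of the hypergeometric sum survives multiplication by `γ` as `γ → 0`:
its denominator carries the vanishing factor `-γ`, and all other denominators stay away
from zero. -/
theorem tendsto_mul_sum_poch_div_poch (μ : ℝ) (m : ℕ) :
    Filter.Tendsto
      (fun γ : ℝ => γ * ∑ k ∈ Finset.range (m + 2),
        poch (-((m : ℝ) + 1)) k / poch (-(m : ℝ) - γ) k * μ ^ k)
      (nhdsWithin 0 (Set.Ioi 0)) (nhds (((m : ℝ) + 1) * μ ^ (m + 1))) := by
  have hpoch (k : ℕ) : ContinuousAt (fun γ : ℝ => poch (-(m : ℝ) - γ) k) 0 :=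
    ((continuous_poch k).comp (continuous_const.sub continuous_id)).continuousAt
  have hcont : ContinuousAt (fun γ : ℝ =>
      γ * ∑ k ∈ Finset.range (m + 1),
        poch (-((m : ℝ) + 1)) k / poch (-(m : ℝ) - γ) k * μ ^ k +
      ((m : ℝ) + 1) * poch (-(m : ℝ)) m / poch (-(m : ℝ) - γ) m * μ ^ (m + 1)) 0 := by
    refine (continuousAt_id.mul (tendsto_finsetSum _ fun k hk => ?_)).add
      ((continuousAt_const.div (hpoch m) ?_).mul continuousAt_const)
    · refine (continuousAt_const.div (hpoch k) ?_).mul continuousAt_const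
      simpa using poch_neg_natCast_ne_zero (Nat.lt_succ_iff.1 (Finset.mem_range.1 hk))
    · simpa using poch_neg_natCast_ne_zero le_rfl
  have hlim := hcont.tendsto.mono_left (nhdsWithin_le_nhds (s := Set.Ioi 0))
  simp only [zero_mul, zero_add, sub_zero,
    mul_div_cancel_right₀ _ (poch_neg_natCast_ne_zero (le_refl m))] at hlim
  refine hlim.congr' ?_
  filter_upwards [self_mem_nhdsWithin] with γ hγ
  have hγ0 : γ ≠ 0 := ne_of_gt hγ
  have hnum : poch (-((m : ℝ) + 1)) (m + 1) = -((m : ℝ) + 1) * poch (-(m : ℝ)) m := by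
    rw [poch_succ_left]
    congr 2
    ring
  have hden : poch (-(m : ℝ) - γ) (m + 1) = poch (-(m : ℝ) - γ) m * -γ := by
    rw [poch_succ]
    congr 1
    ring
  rw [Finset.sum_range_succ _ (m + 1), hnum, hden, mul_add]
  congr 1
  rw [mul_comm (poch (-(m : ℝ) - γ) m), ← div_div, neg_mul, neg_div_neg_eq]
  field_simp

/-- Asymptotics of the relative Fisher information of the Meixner polynomials as
`γ → 0⁺`: `F(γ) ~ (n/γ)(1-μ)² μ^{n-2}`. -/
theorem meixner_fisher_gamma_to_zero
    (μ : ℝ) (hμ0 : 0 < μ) (hμ1 : μ < 1) (n : ℕ) (hn : 1 ≤ n) :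
    Filter.Tendsto
      (fun γ : ℝ => γ *
        ((n : ℝ) * (1 - μ) ^ 2 / (μ * ((n : ℝ) + γ - 1)) *
          ∑ k ∈ Finset.range n, poch (1 - (n : ℝ)) k / poch (2 - (n : ℝ) - γ) k * μ ^ k))
      (nhdsWithin 0 (Set.Ioi 0))
      (nhds ((n : ℝ) * (1 - μ) ^ 2 * μ ^ ((n : ℤ) - 2))) := by
  have hμ : μ ≠ 0 := hμ0.ne'
  obtain rfl | ⟨m, rfl⟩ : n = 1 ∨ ∃ m, n = m + 2 := by
    rcases hn.eq_or_lt with h | h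
    · exact Or.inl h.symm
    · exact Or.inr ⟨n - 2, by omega⟩
  · refine tendsto_const_nhds.congr' ?_
    filter_upwards [self_mem_nhdsWithin] with γ hγ
    have hγ0 : γ ≠ 0 := ne_of_gt hγ
    have hexp : (((1 : ℕ) : ℤ) - 2) = -1 := by norm_num
    rw [hexp, zpow_neg_one]
    simp only [Finset.sum_range_one, poch, Finset.range_zero,
      Finset.prod_empty, Nat.cast_one, pow_zero, add_sub_cancel_left]
    field_simp
  · have hm : (m : ℝ) + 1 ≠ 0 := by positivity
    have hpre : ContinuousAt (fun γ : ℝ =>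
        ((m : ℝ) + 2) * (1 - μ) ^ 2 / (μ * ((m : ℝ) + 1 + γ))) 0 :=
      ContinuousAt.div (by fun_prop) (by fun_prop) (by simp [hμ, hm])
    have hlim := (hpre.tendsto.mono_left (nhdsWithin_le_nhds (s := Set.Ioi 0))).mul
      (tendsto_mul_sum_poch_div_poch μ m)
    have hexp : (((m + 2 : ℕ) : ℤ) - 2) = m := by push_cast; ring
    convert hlim using 2 with γ
    · have h1 : 1 - ((m + 2 : ℕ) : ℝ) = -((m : ℝ) + 1) := by push_cast; ring
      have h2 : 2 - ((m + 2 : ℕ) : ℝ) = -(m : ℝ) := by push_cast; ring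
      have h3 : ((m + 2 : ℕ) : ℝ) + γ - 1 = (m : ℝ) + 1 + γ := by push_cast; ring
      rw [h1, h2, h3, mul_left_comm]
      push_cast
      rfl
    · rw [hexp, zpow_natCast, add_zero]
      push_cast
      field_simp
      ring
end
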